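/- Let X be a Banach space over 𝕂 and p ∈ [1,∞). A pair ((f_n)_{n∈ℕ} in X*, (τ_n)_{n∈ℕ} in X) is a p-ASF for X if and only if there exist bounded linear operators U : X → ℓ^p(ℕ) and V : ℓ^p(ℕ) → X such that V∘U : X → X is a bounded invertible operator, f_n = ζ_n ∘ U (i.e. f_n(x) is the n-th coordinate of U x) for all n, and τ_n = V e_n for all n, where e_n is the n-th standard unit vector of ℓ^p(ℕ) and ζ_n the n-th coordinate functional on ℓ^p(ℕ). -/

import Mathlib

open Filter
open scoped ENNReal

variable {𝕂 : Type*} [RCLike 𝕂] {X : Type*} [NormedAddCommGroup X] [NormedSpace 𝕂 X]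
  [CompleteSpace X]

/-- A pair `((f_n), (τ_n))` with `f_n ∈ X*` and `τ_n ∈ X` is a p-approximate Schauder frame
(p-ASF) for `X`: the analysis operator `θ_f : X → ℓ^p`, `θ_f x = (f_n x)_n`, and the synthesis
operator `θ_τ : ℓ^p → X`, `θ_τ a = ∑ a_n τ_n`, are well-defined bounded linear operators and the
frame operator `S = θ_τ θ_f` is bounded invertible. -/
def IsPASF (p : ℝ≥0∞) [Fact (1 ≤ p)] (f : ℕ → X →L[𝕂] 𝕂) (τ : ℕ → X) : Prop :=
  ∃ (θf : X →L[𝕂] lp (fun _ : ℕ => 𝕂) p) (θτ : lp (fun _ : ℕ => 𝕂) p →L[𝕂] X),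
    (∀ (x : X) (n : ℕ), θf x n = f n x) ∧
    (∀ a : lp (fun _ : ℕ => 𝕂) p,
      Tendsto (fun N => ∑ n ∈ Finset.range N, a n • τ n) atTop (nhds (θτ a))) ∧
    ∃ S : X ≃L[𝕂] X, (S : X →L[𝕂] X) = θτ.comp θf

/-! With `U` the analysis operator and `V` the synthesis operator, everything but the convergence of
`∑ aₙ τₙ` to `V a` reads the same on both sides. Testing this expansion on the unit vectors gives
`τₙ = V eₙ`; conversely, applying `V` to the norm-convergent expansion `a = ∑ aₙ eₙ` recovers it. -/

section UnitVectors

variable {𝕜 ι E : Type*} [NormedRing 𝕜] [AddCommMonoid E] [Module 𝕜 E] [TopologicalSpace E]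

theorem hasSum_lpSingle_one_smul [DecidableEq ι] (p : ℝ≥0∞) (τ : ι → E) (i : ι) :
    HasSum (fun j => (lp.single p i 1 : lp (fun _ : ι => 𝕜) p) j • τ j) (τ i) := by
  have vanish (j : ι) (hj : j ≠ i) : (lp.single p i 1 : lp (fun _ : ι => 𝕜) p) j • τ j = 0 := by
    rw [lp.single_apply_ne p i 1 hj, zero_smul]
  simpa only [lp.single_apply_self, one_smul] using hasSum_single i vanish

theorem hasSum_smul_map_lpSingle_one [DecidableEq ι] {p : ℝ≥0∞} [Fact (1 ≤ p)]
    (hp : p ≠ ⊤) (V : lp (fun _ : ι => 𝕜) p →L[𝕜] E) (a : lp (fun _ : ι => 𝕜) p) :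
    HasSum (fun i => a i • V (lp.single p i 1)) (V a) := by
  have coordinate (i : ι) : V (lp.single p i (a i)) = a i • V (lp.single p i 1) := by
    rw [← map_smul, ← lp.single_smul, smul_eq_mul, mul_one]
  simpa only [coordinate] using V.hasSum (lp.hasSum_single hp a)

theorem forall_tendsto_sum_range_smul_iff_eq_map_lpSingle_one [T2Space E] {p : ℝ≥0∞}
    [Fact (1 ≤ p)] (hp : p ≠ ⊤) {τ : ℕ → E} {V : lp (fun _ : ℕ => 𝕜) p →L[𝕜] E} :
    (∀ a : lp (fun _ : ℕ => 𝕜) p,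
      Tendsto (fun N => ∑ n ∈ Finset.range N, a n • τ n) atTop (nhds (V a))) ↔
      ∀ n, τ n = V (lp.single p n 1) := by
  constructor
  · intro expansion n
    exact tendsto_nhds_unique (hasSum_lpSingle_one_smul p τ n).tendsto_sum_nat
      (expansion (lp.single p n 1))
  · intro hτ a
    simpa only [hτ] using (hasSum_smul_map_lpSingle_one hp V a).tendsto_sum_nat

end UnitVectors

omit [CompleteSpace X] in
theorem isPASF_iff_factorization_general (p : ℝ≥0∞) [Fact (1 ≤ p)] (hp : p ≠ ⊤)
    (f : ℕ → X →L[𝕂] 𝕂) (τ : ℕ → X) :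
    IsPASF p f τ ↔
      ∃ (U : X →L[𝕂] lp (fun _ : ℕ => 𝕂) p) (V : lp (fun _ : ℕ => 𝕂) p →L[𝕂] X),
        (∃ W : X ≃L[𝕂] X, (W : X →L[𝕂] X) = V.comp U) ∧
        (∀ (n : ℕ) (x : X), f n x = U x n) ∧
        (∀ n : ℕ, τ n = V (lp.single p n 1)) := by
  refine exists_congr fun U => exists_congr fun V => ?_
  have analysis_iff : (∀ (x : X) (n : ℕ), U x n = f n x) ↔ ∀ (n : ℕ) (x : X), f n x = U x n := by
    rw [forall_comm]
    simp only [eq_comm]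
  rw [analysis_iff, forall_tendsto_sum_range_smul_iff_eq_map_lpSingle_one hp]
  exact and_rotate.symm

/-- Characterization of p-ASFs: `((f_n), (τ_n))` is a p-ASF for `X` iff there are bounded linear
operators `U : X → ℓ^p(ℕ)` and `V : ℓ^p(ℕ) → X` such that `V ∘ U` is bounded invertible,
`f_n = ζ_n ∘ U` and `τ_n = V e_n` for all `n`. -/
theorem isPASF_iff_factorization (p : ℝ≥0∞) [Fact (1 ≤ p)] (hp : p ≠ ⊤)
    (f : ℕ → X →L[𝕂] 𝕂) (τ : ℕ → X) :
    IsPASF p f τ ↔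
      ∃ (U : X →L[𝕂] lp (fun _ : ℕ => 𝕂) p) (V : lp (fun _ : ℕ => 𝕂) p →L[𝕂] X),
        (∃ W : X ≃L[𝕂] X, (W : X →L[𝕂] X) = V.comp U) ∧
        (∀ (n : ℕ) (x : X), f n x = U x n) ∧
        (∀ n : ℕ, τ n = V (lp.single p n 1)) :=
  isPASF_iff_factorization_general p hp f τ
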